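/- Let β be continuous, bounded, nonnegative, with ψ(t) = e^{−∫₀^t β} satisfying ψ(t) = Ψ t^{−α} + O(t^{−α−δ}) (Ψ > 0, α ∈ (0,1), δ ∈ (0,1−α)). Let N : [0,∞) → [0,∞) be continuous and bounded with (ψ * N)(t) → L as t → ∞ for some L ≥ 0. Then for every μ > 1−α, (N * Y_μ)(t) ~ (L/(Ψ Γ(1−α))) Y_{μ+α}(t) as t → ∞. -/

import Mathlib

open MeasureTheory intervalIntegral Real Set Filter

noncomputable def Y (ν t : ℝ) : ℝ := t ^ (ν - 1) / Real.Gamma ν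

/-!
By the semigroup law `Y a * Y b = Y (a + b)`, a function asymptotic to `c Y a` becomes asymptotic
to `c Y (a + ν)` after convolution with `Y ν`. Put `ν = μ - (1 - α)` and `c = Ψ Γ(1 - α)`, so that
`ψ ~ c Y (1 - α)`, and evaluate `ψ * N * Y ν` in two ways. Since `ψ * N → L = L Y 1`, it is
`L Y (μ + α) + o(Y (μ + α))`. Since `ψ * Y ν = c Y μ + o(Y μ)` and `N` is nonnegative and bounded,
it is also `c (N * Y μ) + o(N * Y μ) + O(1)`, and `O(1)` is `o(Y (μ + α))` because `μ + α > 1`.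
-/

open Asymptotics
open scoped Topology Convolution

section LocallyIntegrable

variable {f g : ℝ → ℝ}

theorem locallyIntegrableOn_Ici_iff {a : ℝ} :
    LocallyIntegrableOn f (Ici a) ↔ ∀ b, IntegrableOn f (Icc a b) := by
  rw [locallyIntegrableOn_iff isLocallyClosed_Ici]
  refine ⟨fun hf b ↦ hf _ Icc_subset_Ici_self isCompact_Icc, fun hf K hKa hK ↦ ?_⟩
  obtain ⟨b, hb⟩ := hK.bddAbove
  exact (hf b).mono_set fun x hx ↦ ⟨hKa hx, hb hx⟩

theorem intervalIntegrable_of_locallyIntegrableOn_Ici {a b c : ℝ}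
    (hf : LocallyIntegrableOn f (Ici a)) (hb : a ≤ b) (hc : a ≤ c) :
    IntervalIntegrable f volume b c :=
  (hf.integrableOn_compact_subset (fun _ hx ↦ (le_min hb hc).trans hx.1)
    isCompact_uIcc).intervalIntegrable

theorem intervalIntegrable_comp_sub_left_of_locallyIntegrableOn {a b t : ℝ}
    (hf : LocallyIntegrableOn f (Ici 0)) (ha : a ≤ t) (hb : b ≤ t) :
    IntervalIntegrable (fun s ↦ f (t - s)) volume a b := by
  simpa using (intervalIntegrable_of_locallyIntegrableOn_Ici hf (sub_nonneg.2 ha)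
    (sub_nonneg.2 hb)).comp_sub_left t

theorem intervalIntegrable_mul_comp_sub_left_of_bounded {a b t C : ℝ}
    (hf : LocallyIntegrableOn f (Ici 0)) (hg : LocallyIntegrableOn g (Ici 0))
    (ha : 0 ≤ a) (hab : a ≤ b) (hbt : b ≤ t) (hC : ∀ s ∈ Icc a b, ‖g (t - s)‖ ≤ C) :
    IntervalIntegrable (fun s ↦ f s * g (t - s)) volume a b := by
  have hf' := intervalIntegrable_of_locallyIntegrableOn_Ici hf ha (ha.trans hab)
  have hg' :=
    intervalIntegrable_comp_sub_left_of_locallyIntegrableOn hg (hab.trans hbt) hbt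
  rw [intervalIntegrable_iff_integrableOn_Ioc_of_le hab] at hf' hg' ⊢
  refine hf'.mul_bdd (c := C) hg'.aestronglyMeasurable ?_
  filter_upwards [ae_restrict_mem measurableSet_Ioc] with s hs using hC s (Ioc_subset_Icc_self hs)

end LocallyIntegrable

section CausalConv

variable {f g h : ℝ → ℝ}

/-- The convolution `(f * g)(t) = ∫₀ᵗ f(s) g(t - s) ds` of functions on the half-line. Values at
negative arguments play no role for `0 ≤ t`, so functions on the half-line are encoded as functions
on `ℝ`. -/
noncomputable def causalConv (f g : ℝ → ℝ) (t : ℝ) : ℝ := ∫ s in (0 : ℝ)..t, f s * g (t - s)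

theorem causalConv_comm (f g : ℝ → ℝ) : causalConv f g = causalConv g f := by
  ext t
  simpa [causalConv, mul_comm] using
    (integral_comp_sub_left (a := 0) (b := t) (fun s ↦ f s * g (t - s)) t).symm

theorem causalConv_congr {f' g' : ℝ → ℝ} {t : ℝ} (ht : 0 ≤ t) (hf : EqOn f f' (Icc 0 t))
    (hg : EqOn g g' (Icc 0 t)) : causalConv f g t = causalConv f' g' t := by
  refine integral_congr fun s hs ↦ ?_
  rw [uIcc_of_le ht] at hs
  simp only [hf hs, hg ⟨sub_nonneg.2 hs.2, sub_le_self t hs.1⟩]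

theorem convolution_eq_causalConv (hf : ∀ s < 0, f s = 0) (hg : ∀ s < 0, g s = 0) {t : ℝ}
    (ht : 0 ≤ t) : (f ⋆[.mul ℝ ℝ] g) t = causalConv f g t := by
  rw [causalConv, integral_of_le ht, ← integral_Icc_eq_integral_Ioc, convolution_def]
  refine (setIntegral_eq_integral_of_forall_compl_eq_zero fun s hs ↦ ?_).symm
  rw [ContinuousLinearMap.mul_apply']
  rcases not_and_or.1 hs with hs | hs
  · rw [hf s (not_le.1 hs), zero_mul]
  · rw [hg (t - s) (sub_neg.2 (not_le.1 hs)), mul_zero]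

theorem convolution_eq_zero_of_neg (hf : ∀ s < 0, f s = 0) (hg : ∀ s < 0, g s = 0) {t : ℝ}
    (ht : t < 0) : (f ⋆[.mul ℝ ℝ] g) t = 0 := by
  rw [convolution_def]
  refine integral_eq_zero_of_ae (.of_forall fun s ↦ ?_)
  rcases lt_or_ge s 0 with hs | hs
  · simp [hf s hs]
  · simp [hg (t - s) (by linarith)]

theorem indicator_Icc_zero_of_neg (f : ℝ → ℝ) (T : ℝ) :
    ∀ s < 0, (Icc 0 T).indicator f s = 0 :=
  fun _ hs ↦ indicator_of_notMem (fun h ↦ hs.not_ge h.1) f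

theorem eqOn_causalConv_convolution_indicator (f g : ℝ → ℝ) (T : ℝ) :
    EqOn (causalConv f g)
      ((Icc 0 T).indicator f ⋆[.mul ℝ ℝ] (Icc 0 T).indicator g) (Icc 0 T) := by
  intro t ht
  have hsub : Icc 0 t ⊆ Icc 0 T := Icc_subset_Icc_right ht.2
  rw [convolution_eq_causalConv (indicator_Icc_zero_of_neg f T) (indicator_Icc_zero_of_neg g T)
    ht.1]
  exact causalConv_congr ht.1 ((eqOn_indicator.mono hsub).symm) ((eqOn_indicator.mono hsub).symm)

theorem locallyIntegrableOn_causalConv (hf : LocallyIntegrableOn f (Ici 0))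
    (hg : LocallyIntegrableOn g (Ici 0)) : LocallyIntegrableOn (causalConv f g) (Ici 0) := by
  rw [locallyIntegrableOn_Ici_iff] at hf hg ⊢
  intro T
  have hconv := ((hf T).integrable_indicator measurableSet_Icc).integrable_convolution
    (.mul ℝ ℝ) ((hg T).integrable_indicator measurableSet_Icc)
  exact hconv.integrableOn.congr_fun (eqOn_causalConv_convolution_indicator f g T).symm
    measurableSet_Icc

theorem convolution_assoc_of_bounded {C : ℝ} (hf : Integrable f) (hfC : ∀ s, ‖f s‖ ≤ C)
    (hg : Integrable g) (hh : Integrable h) (t : ℝ) :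
    ((f ⋆[.mul ℝ ℝ] g) ⋆[.mul ℝ ℝ] h) t
      = (f ⋆[.mul ℝ ℝ] (g ⋆[.mul ℝ ℝ] h)) t := by
  refine convolution_assoc _ _ _ _ mul_assoc hf.aestronglyMeasurable hg.aestronglyMeasurable
    hh.aestronglyMeasurable (hf.ae_convolution_exists _ hg)
    (hg.norm.ae_convolution_exists _ hh.norm) ?_
  exact ((hg.norm.integrable_convolution _ hh.norm).comp_sub_left t).bdd_mul
    hf.norm.aestronglyMeasurable (.of_forall fun s ↦ (norm_norm (f s)).trans_le (hfC s))

theorem causalConv_assoc {C : ℝ} (hf : LocallyIntegrableOn f (Ici 0))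
    (hfC : ∀ s, 0 ≤ s → ‖f s‖ ≤ C) (hg : LocallyIntegrableOn g (Ici 0))
    (hh : LocallyIntegrableOn h (Ici 0)) {t : ℝ} (ht : 0 ≤ t) :
    causalConv (causalConv f g) h t = causalConv f (causalConv g h) t := by
  rw [locallyIntegrableOn_Ici_iff] at hf hg hh
  set F := (Icc 0 t).indicator f
  set G := (Icc 0 t).indicator g
  set H := (Icc 0 t).indicator h
  have hF : ∀ s < 0, F s = 0 := indicator_Icc_zero_of_neg f t
  have hG : ∀ s < 0, G s = 0 := indicator_Icc_zero_of_neg g t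
  have hH : ∀ s < 0, H s = 0 := indicator_Icc_zero_of_neg h t
  have hFC (s : ℝ) : ‖F s‖ ≤ C := by
    rw [norm_indicator_eq_indicator_norm]
    exact indicator_le' (fun s hs ↦ hfC s hs.1)
      (fun _ _ ↦ (norm_nonneg _).trans (hfC 0 le_rfl)) s
  calc causalConv (causalConv f g) h t
      = causalConv (F ⋆[.mul ℝ ℝ] G) H t :=
        causalConv_congr ht (eqOn_causalConv_convolution_indicator f g t) eqOn_indicator.symm
    _ = ((F ⋆[.mul ℝ ℝ] G) ⋆[.mul ℝ ℝ] H) t :=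
        (convolution_eq_causalConv (fun _ ↦ convolution_eq_zero_of_neg hF hG) hH ht).symm
    _ = (F ⋆[.mul ℝ ℝ] (G ⋆[.mul ℝ ℝ] H)) t :=
        convolution_assoc_of_bounded ((hf t).integrable_indicator measurableSet_Icc) hFC
          ((hg t).integrable_indicator measurableSet_Icc)
          ((hh t).integrable_indicator measurableSet_Icc) t
    _ = causalConv F (G ⋆[.mul ℝ ℝ] H) t :=
        convolution_eq_causalConv hF (fun _ ↦ convolution_eq_zero_of_neg hG hH) ht
    _ = causalConv f (causalConv g h) t :=
        (causalConv_congr ht eqOn_indicator.symm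
          (eqOn_causalConv_convolution_indicator g h t)).symm

theorem causalConv_sub_smul {k : ℝ → ℝ} {c t : ℝ}
    (hf : IntervalIntegrable (fun s ↦ f s * h (t - s)) volume 0 t)
    (hk : IntervalIntegrable (fun s ↦ k s * h (t - s)) volume 0 t) :
    causalConv (f - c • k) h t = causalConv f h t - c * causalConv k h t := by
  simp only [causalConv, Pi.sub_apply, Pi.smul_apply, smul_eq_mul, sub_mul, mul_assoc]
  rw [integral_sub hf (hk.const_mul c), intervalIntegral.integral_const_mul]

theorem causalConv_causalConv_sub_smul {p : ℝ → ℝ} {c C t : ℝ}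
    (hf : LocallyIntegrableOn f (Ici 0)) (hg : LocallyIntegrableOn g (Ici 0))
    (hp : LocallyIntegrableOn p (Ici 0)) (hh : LocallyIntegrableOn h (Ici 0))
    (hhC : ∀ s, 0 ≤ s → ‖h s‖ ≤ C) (ht : 0 ≤ t) :
    causalConv (causalConv f g - c • p) h t
      = causalConv (causalConv f h) g t - c * causalConv h p t := by
  have hint {k : ℝ → ℝ} (hk : LocallyIntegrableOn k (Ici 0)) :
      IntervalIntegrable (fun s ↦ k s * h (t - s)) volume 0 t :=
    intervalIntegrable_mul_comp_sub_left_of_bounded hk hh le_rfl ht le_rfl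
      fun s hs ↦ hhC _ (sub_nonneg.2 hs.2)
  rw [causalConv_sub_smul (hint (locallyIntegrableOn_causalConv hf hg)) (hint hp),
    causalConv_comm _ h, ← causalConv_assoc hh hhC hf hg ht, causalConv_comm h f,
    causalConv_comm p h]

end CausalConv

section Comparison

/-- `h` is dominated by `m` on backward windows: for each fixed `R` there is a constant `C` with
`‖h s‖ ≤ C * ‖m t‖` for all large `t` and all `s ∈ [t - R, t]`. Under this condition the part of `k`
on a bounded interval contributes only `O(m)` to `causalConv k h`. -/
def WindowDominated (h m : ℝ → ℝ) : Prop :=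
  ∀ R, ∃ C, ∀ᶠ t in atTop, ∀ s ∈ Icc (t - R) t, ‖h s‖ ≤ C * ‖m t‖

variable {h k p m r : ℝ → ℝ}

theorem windowDominated_one_of_bounded {C : ℝ} (hC : ∀ s, 0 ≤ s → ‖h s‖ ≤ C) :
    WindowDominated h 1 := by
  refine fun R ↦ ⟨C, ?_⟩
  filter_upwards [eventually_ge_atTop R] with t ht s hs
  simpa using hC s ((sub_nonneg.2 ht).trans hs.1)

theorem WindowDominated.norm_comp_sub_left_le (hhm : WindowDominated h m) (R : ℝ) :
    ∃ C, ∀ᶠ t in atTop, ∀ s ∈ Icc 0 R, ‖h (t - s)‖ ≤ C * ‖m t‖ := by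
  obtain ⟨C, hC⟩ := hhm R
  refine ⟨C, hC.mono fun t ht s hs ↦ ht (t - s) ⟨?_, ?_⟩⟩ <;> linarith [hs.1, hs.2]

theorem WindowDominated.integral_mul_comp_sub_left_isBigO {R : ℝ} (hhm : WindowDominated h m)
    (hk : LocallyIntegrableOn k (Ici 0)) (hR : 0 ≤ R) :
    (fun t ↦ ∫ s in (0 : ℝ)..R, k s * h (t - s)) =O[atTop] m := by
  obtain ⟨C, hC⟩ := hhm.norm_comp_sub_left_le R
  have hkR := (intervalIntegrable_of_locallyIntegrableOn_Ici hk le_rfl hR).norm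
  refine .of_bound ((∫ s in (0 : ℝ)..R, ‖k s‖) * C) ?_
  filter_upwards [hC] with t ht
  calc ‖∫ s in (0 : ℝ)..R, k s * h (t - s)‖
      ≤ ∫ s in (0 : ℝ)..R, ‖k s‖ * (C * ‖m t‖) := by
        refine norm_integral_le_of_norm_le hR (.of_forall fun s hs ↦ ?_) (hkR.mul_const _)
        rw [norm_mul]
        gcongr
        exact ht s (Ioc_subset_Icc_self hs)
    _ = (∫ s in (0 : ℝ)..R, ‖k s‖) * C * ‖m t‖ := by
        rw [intervalIntegral.integral_mul_const, mul_assoc]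

theorem WindowDominated.eventually_intervalIntegrable_mul_comp_sub_left
    (hhm : WindowDominated h m) (hk : LocallyIntegrableOn k (Ici 0))
    (hh : LocallyIntegrableOn h (Ici 0)) (hkp : k =O[atTop] p)
    (hph : ∀ᶠ t in atTop, IntervalIntegrable (fun s ↦ p s * h (t - s)) volume 0 t) :
    ∀ᶠ t in atTop, IntervalIntegrable (fun s ↦ k s * h (t - s)) volume 0 t := by
  obtain ⟨c, hc⟩ := hkp.bound
  obtain ⟨R, hR, hR0⟩ := ((eventually_forall_ge_atTop.2 hc).and (eventually_ge_atTop 0)).exists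
  obtain ⟨C, hC⟩ := hhm.norm_comp_sub_left_le R
  filter_upwards [hph, hC, eventually_ge_atTop R] with t hpt hCt hRt
  have hnear : IntervalIntegrable (fun s ↦ k s * h (t - s)) volume 0 R :=
    intervalIntegrable_mul_comp_sub_left_of_bounded hk hh le_rfl hR0 hRt hCt
  have hpfar : IntervalIntegrable (fun s ↦ c * ‖p s * h (t - s)‖) volume R t :=
    (hpt.norm.const_mul c).mono_set (uIcc_subset_uIcc_right (mem_uIcc_of_le hR0 hRt))
  refine hnear.trans (hpfar.mono_fun' ?_ ?_)
  · rw [uIoc_of_le hRt]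
    have hkRt := intervalIntegrable_of_locallyIntegrableOn_Ici hk hR0 (hR0.trans hRt)
    have hhRt := intervalIntegrable_comp_sub_left_of_locallyIntegrableOn hh hRt le_rfl
    exact hkRt.aestronglyMeasurable.mul hhRt.aestronglyMeasurable
  · filter_upwards [ae_restrict_mem measurableSet_uIoc] with s hs
    rw [uIoc_of_le hRt] at hs
    rw [norm_mul, norm_mul, ← mul_assoc]
    exact mul_le_mul_of_nonneg_right (hR s hs.1.le) (norm_nonneg _)

theorem norm_integral_mul_comp_sub_left_le_of_norm_le {R t ε : ℝ} (hε : 0 ≤ ε) (hR0 : 0 ≤ R)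
    (hRt : R ≤ t) (hh0 : ∀ s, 0 ≤ s → 0 ≤ h s) (hp0 : ∀ s, 0 ≤ s → 0 ≤ p s)
    (hkp : ∀ s, R ≤ s → ‖k s‖ ≤ ε * p s)
    (hpt : IntervalIntegrable (fun s ↦ p s * h (t - s)) volume 0 t) :
    ‖∫ s in R..t, k s * h (t - s)‖ ≤ ε * causalConv p h t := by
  have hnonneg : ∀ s ∈ Icc 0 t, 0 ≤ p s * h (t - s) := fun s hs ↦
    mul_nonneg (hp0 s hs.1) (hh0 _ (sub_nonneg.2 hs.2))
  have hsub : uIcc R t ⊆ uIcc 0 t := uIcc_subset_uIcc_right (mem_uIcc_of_le hR0 hRt)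
  calc ‖∫ s in R..t, k s * h (t - s)‖
      ≤ ∫ s in R..t, ε * (p s * h (t - s)) := by
        refine norm_integral_le_of_norm_le hRt (.of_forall fun s hs ↦ ?_)
          ((hpt.mono_set hsub).const_mul ε)
        have hhs := hh0 (t - s) (sub_nonneg.2 hs.2)
        rw [norm_mul, Real.norm_of_nonneg hhs, ← mul_assoc]
        exact mul_le_mul_of_nonneg_right (hkp s hs.1.le) hhs
    _ = ε * ∫ s in R..t, p s * h (t - s) := intervalIntegral.integral_const_mul _ _
    _ ≤ ε * causalConv p h t := by
        refine mul_le_mul_of_nonneg_left ?_ hε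
        refine integral_mono_interval hR0 hRt le_rfl ?_ hpt
        filter_upwards [ae_restrict_mem measurableSet_Ioc] with s hs
        exact hnonneg s (Ioc_subset_Icc_self hs)

theorem WindowDominated.causalConv_isLittleO (hhm : WindowDominated h m)
    (hk : LocallyIntegrableOn k (Ici 0)) (hh : LocallyIntegrableOn h (Ici 0))
    (hh0 : ∀ s, 0 ≤ s → 0 ≤ h s) (hp0 : ∀ s, 0 ≤ s → 0 ≤ p s) (hkp : k =o[atTop] p)
    (hph : ∀ᶠ t in atTop, IntervalIntegrable (fun s ↦ p s * h (t - s)) volume 0 t)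
    (hmr : m =o[atTop] r) :
    causalConv k h =o[atTop] fun t ↦ ‖causalConv p h t‖ + ‖r t‖ := by
  refine isLittleO_iff.2 fun ε hε ↦ ?_
  obtain ⟨R, hR, hR0⟩ := ((eventually_forall_ge_atTop.2 (isLittleO_iff.1 hkp hε)).and
    (eventually_ge_atTop 0)).exists
  have hkpR : ∀ s, R ≤ s → ‖k s‖ ≤ ε * p s := fun s hs ↦
    (hR s hs).trans_eq (by rw [Real.norm_of_nonneg (hp0 s (hR0.trans hs))])
  filter_upwards [eventually_ge_atTop R, hph,
    hhm.eventually_intervalIntegrable_mul_comp_sub_left hk hh hkp.isBigO hph,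
    isLittleO_iff.1 ((hhm.integral_mul_comp_sub_left_isBigO hk hR0).trans_isLittleO hmr) hε]
    with t hRt hpt hkt hnear
  have hfar := norm_integral_mul_comp_sub_left_le_of_norm_le hε.le hR0 hRt hh0 hp0 hkpR hpt
  have hRmem : R ∈ uIcc 0 t := mem_uIcc_of_le hR0 hRt
  calc ‖causalConv k h t‖
      = ‖(∫ s in (0 : ℝ)..R, k s * h (t - s)) + ∫ s in R..t, k s * h (t - s)‖ := by
        rw [integral_add_adjacent_intervals (hkt.mono_set (uIcc_subset_uIcc_left hRmem))
          (hkt.mono_set (uIcc_subset_uIcc_right hRmem)), causalConv]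
    _ ≤ ε * ‖r t‖ + ε * causalConv p h t := norm_add_le_of_le hnear hfar
    _ ≤ ε * ‖r t‖ + ε * ‖causalConv p h t‖ := by gcongr; exact le_abs_self _
    _ = ε * ‖‖causalConv p h t‖ + ‖r t‖‖ := by
        rw [Real.norm_of_nonneg (by positivity : 0 ≤ ‖causalConv p h t‖ + ‖r t‖)]
        ring

theorem causalConv_isLittleO_of_bounded {C : ℝ} (hk : LocallyIntegrableOn k (Ici 0))
    (hp : LocallyIntegrableOn p (Ici 0)) (hp0 : ∀ s, 0 ≤ s → 0 ≤ p s) (hkp : k =o[atTop] p)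
    (hh : LocallyIntegrableOn h (Ici 0)) (hh0 : ∀ s, 0 ≤ s → 0 ≤ h s)
    (hhC : ∀ s, 0 ≤ s → ‖h s‖ ≤ C) (hr : (1 : ℝ → ℝ) =o[atTop] r) :
    causalConv k h =o[atTop] fun t ↦ ‖causalConv p h t‖ + ‖r t‖ := by
  refine (windowDominated_one_of_bounded hhC).causalConv_isLittleO hk hh hh0 hp0 hkp ?_ hr
  filter_upwards [eventually_ge_atTop 0] with t ht
  exact intervalIntegrable_mul_comp_sub_left_of_bounded hp hh le_rfl ht le_rfl
    fun s hs ↦ hhC _ (sub_nonneg.2 hs.2)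

theorem tendsto_div_of_sub_isLittleO {ι : Type*} {l : Filter ι} {u r : ι → ℝ} {c L : ℝ}
    (hc : c ≠ 0) (hr : ∀ᶠ t in l, r t ≠ 0)
    (h : (fun t ↦ c * u t - L * r t) =o[l] fun t ↦ ‖u t‖ + ‖r t‖) :
    Tendsto (fun t ↦ u t / r t) l (𝓝 (L / c)) := by
  have hc2 : 0 < ‖c‖ / 2 := half_pos (norm_pos_iff.2 hc)
  have hur : u =O[l] r := by
    refine .of_bound ((‖c‖ / 2 + ‖L‖) / (‖c‖ / 2)) ?_
    filter_upwards [isLittleO_iff.1 h hc2] with t ht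
    rw [Real.norm_of_nonneg (by positivity : 0 ≤ ‖u t‖ + ‖r t‖)] at ht
    rw [div_mul_eq_mul_div, le_div_iff₀ hc2]
    have htriangle := norm_sub_norm_le (c * u t) (L * r t)
    rw [norm_mul, norm_mul] at htriangle
    linarith
  have hlim : Tendsto (fun t ↦ (c * u t - L * r t) / r t) l (𝓝 0) :=
    (h.trans_isBigO (hur.norm_left.add (isBigO_refl r l).norm_left)).tendsto_div_nhds_zero
  have hlim' := (hlim.add_const L).div_const c
  rw [zero_add] at hlim'
  refine hlim'.congr' ?_
  filter_upwards [hr] with t ht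
  field_simp
  ring

end Comparison

section Kernel

variable {a b ν : ℝ}

theorem rpow_isLittleO_rpow_atTop (hab : a < b) :
    (fun t : ℝ ↦ t ^ a) =o[atTop] fun t ↦ t ^ b := by
  have hdecay := (isLittleO_one_iff ℝ).2 (tendsto_rpow_neg_atTop (sub_pos.2 hab))
  refine (hdecay.mul_isBigO (isBigO_refl (fun t : ℝ ↦ t ^ b) atTop)).congr' ?_ (by simp)
  filter_upwards [eventually_gt_atTop 0] with t ht
  rw [← rpow_add ht]
  ring_nf

theorem rpow_le_mul_rpow_of_half_le {s t : ℝ} (e : ℝ) (ht : 0 < t) (hts : t / 2 ≤ s)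
    (hst : s ≤ t) : s ^ e ≤ (1 + (1 / 2) ^ e) * t ^ e := by
  have hhalf : (t / 2) ^ e = (1 / 2) ^ e * t ^ e := by
    rw [← mul_rpow (by norm_num) ht.le, one_div_mul_eq_div]
  have ht0 : 0 ≤ t ^ e := rpow_nonneg ht.le e
  have hhalf0 : 0 ≤ (1 / 2 : ℝ) ^ e * t ^ e := by positivity
  rw [add_mul, one_mul]
  rcases le_total 0 e with he | he
  · linarith [rpow_le_rpow ((half_pos ht).le.trans hts) hst he]
  · linarith [rpow_le_rpow_of_nonpos (half_pos ht) hts he]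

theorem integral_rpow_mul_sub_rpow {t : ℝ} (ha : 0 < a) (hb : 0 < b) (ht : 0 < t) :
    ∫ s in (0 : ℝ)..t, s ^ (a - 1) * (t - s) ^ (b - 1)
      = t ^ (a + b - 1) * ProbabilityTheory.beta a b := by
  have hofReal : ∫ s in (0 : ℝ)..t, ((s ^ (a - 1) * (t - s) ^ (b - 1) : ℝ) : ℂ)
      = ∫ s in (0 : ℝ)..t, (s : ℂ) ^ ((a : ℂ) - 1) * ((t : ℂ) - s) ^ ((b : ℂ) - 1) := by
    refine integral_congr fun s hs ↦ ?_
    rw [uIcc_of_le ht.le] at hs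
    simp [Complex.ofReal_cpow hs.1, Complex.ofReal_cpow (sub_nonneg.2 hs.2)]
  apply Complex.ofReal_injective
  rw [← intervalIntegral.integral_ofReal, hofReal, Complex.betaIntegral_scaled _ _ ht,
    Complex.betaIntegral_eq_Gamma_mul_div _ _ (by simpa) (by simpa), ProbabilityTheory.beta]
  simp [Complex.ofReal_cpow ht.le, Complex.Gamma_ofReal, ← Complex.ofReal_add]

theorem Y_pos {t : ℝ} (hν : 0 < ν) (ht : 0 < t) : 0 < Y ν t :=
  div_pos (rpow_pos_of_pos ht _) (Gamma_pos_of_pos hν)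

theorem Y_nonneg {t : ℝ} (hν : 0 < ν) (ht : 0 ≤ t) : 0 ≤ Y ν t :=
  div_nonneg (rpow_nonneg ht _) (Gamma_pos_of_pos hν).le

theorem Y_one : Y 1 = 1 := by
  ext t
  simp [Y]

theorem locallyIntegrableOn_Y (hν : 0 < ν) : LocallyIntegrableOn (Y ν) (Ici 0) := by
  refine locallyIntegrableOn_Ici_iff.2 fun T ↦ ?_
  have hT : IntervalIntegrable (Y ν) volume 0 T :=
    (intervalIntegrable_rpow' (by linarith)).div_const _
  exact (integrableOn_Icc_iff_integrableOn_Ioc (by finiteness)).2 hT.1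

theorem Y_isLittleO_Y (hb : 0 < b) (hab : a < b) : Y a =o[atTop] Y b := by
  unfold Y
  simp only [div_eq_inv_mul]
  exact ((rpow_isLittleO_rpow_atTop (by linarith)).const_mul_left _).const_mul_right
    (inv_ne_zero (Gamma_pos_of_pos hb).ne')

theorem windowDominated_Y (ν : ℝ) : WindowDominated (Y ν) (Y ν) := by
  refine fun R ↦ ⟨1 + (1 / 2) ^ (ν - 1), ?_⟩
  filter_upwards [eventually_ge_atTop (2 * R), eventually_gt_atTop 0] with t htR ht s hs
  have hs0 : t / 2 ≤ s := by linarith [hs.1]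
  rw [Y, Y, norm_div, norm_div, Real.norm_of_nonneg (rpow_nonneg (by linarith) _),
    Real.norm_of_nonneg (rpow_nonneg ht.le _), mul_div_assoc']
  gcongr
  exact rpow_le_mul_rpow_of_half_le _ ht hs0 hs.2

theorem causalConv_Y_Y {t : ℝ} (ha : 0 < a) (hb : 0 < b) (ht : 0 < t) :
    causalConv (Y a) (Y b) t = Y (a + b) t := by
  have hΓa := (Gamma_pos_of_pos ha).ne'
  have hΓb := (Gamma_pos_of_pos hb).ne'
  calc causalConv (Y a) (Y b) t
      = (∫ s in (0 : ℝ)..t, s ^ (a - 1) * (t - s) ^ (b - 1)) / (Real.Gamma a * Real.Gamma b) := by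
        simp only [causalConv, Y, div_mul_div_comm, intervalIntegral.integral_div]
    _ = Y (a + b) t := by
        rw [integral_rpow_mul_sub_rpow ha hb ht, ProbabilityTheory.beta, Y]
        field_simp

theorem intervalIntegrable_Y_mul_Y {t : ℝ} (ha : 0 < a) (hb : 0 < b) (ht : 0 < t) :
    IntervalIntegrable (fun s ↦ Y a s * Y b (t - s)) volume 0 t :=
  intervalIntegrable_of_integral_ne_zero <|
    (causalConv_Y_Y ha hb ht).trans_ne (Y_pos (add_pos ha hb) ht).ne'

end Kernel

section Abelian

variable {a c α μ ν Ψ L B : ℝ} {f ψ N : ℝ → ℝ}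

theorem causalConv_Y_sub_isLittleO (ha : 0 < a) (hν : 0 < ν)
    (hf : LocallyIntegrableOn f (Ici 0))
    (hfa : (fun t ↦ f t - c * Y a t) =o[atTop] Y a) :
    (fun t ↦ causalConv f (Y ν) t - c * Y (a + ν) t) =o[atTop] Y (a + ν) := by
  have hYa := locallyIntegrableOn_Y ha
  have hYν := locallyIntegrableOn_Y hν
  have hYY : ∀ᶠ t in atTop, IntervalIntegrable (fun s ↦ Y a s * Y ν (t - s)) volume 0 t :=
    (eventually_gt_atTop 0).mono fun _ ↦ intervalIntegrable_Y_mul_Y ha hν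
  have hconv : causalConv (Y a) (Y ν) =ᶠ[atTop] Y (a + ν) :=
    (eventually_gt_atTop 0).mono fun _ ↦ causalConv_Y_Y ha hν
  have hfO : f =O[atTop] Y a := by
    simpa using hfa.isBigO.add ((isBigO_refl (Y a) atTop).const_mul_left c)
  have hrem := (windowDominated_Y ν).causalConv_isLittleO (r := Y (a + ν))
    (hf.sub (hYa.smul c)) hYν (fun _ ↦ Y_nonneg hν) (fun _ ↦ Y_nonneg ha) hfa hYY
    (Y_isLittleO_Y (add_pos ha hν) (lt_add_of_pos_left ν ha))
  refine (hrem.trans_isBigO ?_).congr' ?_ .rfl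
  · exact hconv.trans_isBigO (isBigO_refl _ _) |>.norm_left.add (isBigO_refl _ _).norm_left
  · filter_upwards [hconv, hYY,
      (windowDominated_Y ν).eventually_intervalIntegrable_mul_comp_sub_left hf hYν hfO hYY]
      with t ht hYYt hft
    rw [← ht]
    exact causalConv_sub_smul hft hYYt

theorem sub_const_mul_Y_isLittleO_of_isEquivalent (hα : α < 1)
    (hψ : ψ ~[atTop] fun t ↦ Ψ * t ^ (-α)) :
    (fun t ↦ ψ t - Ψ * Real.Gamma (1 - α) * Y (1 - α) t) =o[atTop] Y (1 - α) := by
  have hΓ := (Gamma_pos_of_pos (sub_pos.2 hα)).ne'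
  have hY (t : ℝ) : t ^ (-α) = Real.Gamma (1 - α) * Y (1 - α) t := by
    rw [Y, mul_div_cancel₀ _ hΓ]
    ring_nf
  simp only [hY, ← mul_assoc] at hψ
  exact hψ.isLittleO.trans_isBigO ((isBigO_refl _ _).const_mul_left _)

theorem causalConv_Y_sub_isLittleO_of_tendsto (hν : 0 < ν) (hf : LocallyIntegrableOn f (Ici 0))
    (hfL : Tendsto f atTop (𝓝 L)) :
    (fun t ↦ causalConv f (Y ν) t - L * Y (1 + ν) t) =o[atTop] Y (1 + ν) := by
  refine causalConv_Y_sub_isLittleO one_pos hν hf ?_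
  rw [Y_one]
  refine (isLittleO_one_iff ℝ).2 ?_
  simpa using hfL.sub_const L

theorem conv_N_Y_asymptotics_general (hψ : LocallyIntegrableOn ψ (Ici 0)) (hα : α < 1)
    (hΨ : Ψ ≠ 0) (hψasym : ψ ~[atTop] fun t ↦ Ψ * t ^ (-α))
    (hN : LocallyIntegrableOn N (Ici 0)) (hN0 : ∀ t, 0 ≤ t → 0 ≤ N t)
    (hNB : ∀ t, 0 ≤ t → N t ≤ B) (hconv : Tendsto (causalConv ψ N) atTop (𝓝 L))
    (hμ : 1 - α < μ) :
    Tendsto (fun t ↦ causalConv N (Y μ) t / Y (μ + α) t) atTop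
      (𝓝 (L / (Ψ * Real.Gamma (1 - α)))) := by
  set c := Ψ * Real.Gamma (1 - α)
  obtain ⟨ν, rfl⟩ : ∃ ν, μ = 1 - α + ν := ⟨μ - (1 - α), by ring⟩
  rw [show 1 - α + ν + α = 1 + ν by ring]
  have hα' : 0 < 1 - α := sub_pos.2 hα
  have hν : 0 < ν := by linarith
  have hYν := locallyIntegrableOn_Y hν
  have hYμ := locallyIntegrableOn_Y (hα'.trans hμ)
  have hNnorm (s : ℝ) (hs : 0 ≤ s) : ‖N s‖ ≤ B := by
    rw [Real.norm_of_nonneg (hN0 s hs)]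
    exact hNB s hs
  have hremainder := causalConv_Y_sub_isLittleO hα' hν hψ
    (sub_const_mul_Y_isLittleO_of_isEquivalent hα hψasym)
  have hone : (1 : ℝ → ℝ) =o[atTop] Y (1 + ν) :=
    Y_one ▸ Y_isLittleO_Y (by linarith) (by linarith)
  have hremainderN := causalConv_isLittleO_of_bounded
    ((locallyIntegrableOn_causalConv hψ hYν).sub (hYμ.smul c)) hYμ
    (fun _ ↦ Y_nonneg (hα'.trans hμ)) hremainder hN hN0 hNnorm hone
  rw [causalConv_comm (Y _) N] at hremainderN
  have hmain := causalConv_Y_sub_isLittleO_of_tendsto hν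
    (locallyIntegrableOn_causalConv hψ hN) hconv
  have hY1O : Y (1 + ν) =O[atTop]
      fun t ↦ ‖causalConv N (Y (1 - α + ν)) t‖ + ‖Y (1 + ν) t‖ :=
    .of_norm_le fun t ↦ le_add_of_nonneg_left (norm_nonneg _)
  refine tendsto_div_of_sub_isLittleO (mul_ne_zero hΨ (Gamma_pos_of_pos hα').ne')
    ((eventually_gt_atTop 0).mono fun t ht ↦ (Y_pos (by linarith) ht).ne') ?_
  refine ((hmain.trans_isBigO hY1O).sub hremainderN).congr' ?_ .rfl
  filter_upwards [eventually_ge_atTop 0] with t ht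
  rw [causalConv_causalConv_sub_smul hψ hYν hYμ hN hNnorm ht]
  ring

end Abelian

theorem continuous_exp_neg_integral {β : ℝ → ℝ} (hβ : Continuous β) (a : ℝ) :
    Continuous fun t ↦ Real.exp (-∫ s in a..t, β s) :=
  Real.continuous_exp.comp (continuous_primitive (fun _ _ ↦ hβ.intervalIntegrable _ _) a).neg

theorem isEquivalent_const_mul_rpow_of_abs_sub_le {a b C Ψ : ℝ} {ψ : ℝ → ℝ} (hΨ : Ψ ≠ 0)
    (hab : a < b) (hψ : ∀ᶠ t in atTop, |ψ t - Ψ * t ^ b| ≤ C * t ^ a) :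
    ψ ~[atTop] fun t ↦ Ψ * t ^ b := by
  have hbound : (fun t ↦ ψ t - Ψ * t ^ b) =O[atTop] fun t : ℝ ↦ t ^ a := by
    refine .of_bound |C| (hψ.mono fun t ht ↦ ht.trans ?_)
    rw [← Real.norm_eq_abs, ← norm_mul]
    exact le_norm_self _
  exact (hbound.trans_isLittleO (rpow_isLittleO_rpow_atTop hab)).const_mul_right hΨ

theorem conv_N_Y_asymptotics (β : ℝ → ℝ)
    (hβc : Continuous β) (hβ0 : ∀ a, 0 ≤ β a) (hβb : ∃ C, ∀ a, β a ≤ C)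
    (ψ : ℝ → ℝ) (hψ : ∀ t, ψ t = Real.exp (-∫ s in (0:ℝ)..t, β s))
    (Ψ α δ : ℝ)
    (hΨ : 0 < Ψ) (hα : 0 < α) (hα1 : α < 1) (hδ : 0 < δ) (hδ1 : δ < 1 - α)
    (hψasym : ∃ C₀ K : ℝ, 0 < C₀ ∧ 0 < K ∧ ∀ t : ℝ, K ≤ t →
      |ψ t - Ψ * t ^ (-α)| ≤ C₀ * t ^ (-α - δ))
    (N : ℝ → ℝ) (hNc : Continuous N) (hN0 : ∀ t, 0 ≤ N t)
    (hNb : ∃ B, ∀ t, N t ≤ B)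
    (L : ℝ) (hL : 0 ≤ L)
    (hconv : Tendsto (fun t => ∫ s in (0:ℝ)..t, ψ s * N (t - s)) atTop (nhds L)) :
    ∀ μ : ℝ, 1 - α < μ →
      Tendsto (fun t => (∫ s in (0:ℝ)..t, N s * Y μ (t - s)) / Y (μ + α) t)
        atTop (nhds (L / (Ψ * Real.Gamma (1 - α)))) := by
  intro μ hμ
  obtain ⟨C₀, K, -, -, hψK⟩ := hψasym
  obtain ⟨B, hB⟩ := hNb
  have hψc : Continuous ψ := funext hψ ▸ continuous_exp_neg_integral hβc 0
  have hψequiv := isEquivalent_const_mul_rpow_of_abs_sub_le hΨ.ne' (sub_lt_self (-α) hδ)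
    ((eventually_ge_atTop K).mono hψK)
  exact conv_N_Y_asymptotics_general (hψc.locallyIntegrable.locallyIntegrableOn _) hα1 hΨ.ne'
    hψequiv (hNc.locallyIntegrable.locallyIntegrableOn _) (fun t _ ↦ hN0 t) (fun t _ ↦ hB t)
    hconv hμ
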